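/- arXiv:1112.2306 — 7 statements merged into one kernel-verified Lean document; each statement's English description precedes it below -/
import Mathlib

section
/- Let n, m be positive integers and let A be an n×m complex matrix (not depending on P). For every real P ≥ 0 the matrix I_n + P·A·Aᴴ is Hermitian positive definite, so its determinant is a positive real number, and the function P ↦ log det(I_n + P·A·Aᴴ) / log P tends to rank(A) as the real parameter P tends to infinity. -/
/-!
Let `λᵢ ≥ 0` be the eigenvalues of the positive semidefinite matrix `A * Aᴴ`. By the spectral
theorem `det (1 + P • A * Aᴴ) = ∏ᵢ (1 + P λᵢ)`, so the logarithm of the determinant is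
`∑ᵢ log (1 + P λᵢ)`. After division by `log P`, a summand tends to `1` if `λᵢ > 0` and is `0` if
`λᵢ = 0`. Hence the limit is the number of nonzero eigenvalues, i.e. `rank (A * Aᴴ) = rank A`.
-/

open Filter Matrix ComplexOrder

lemma det_one_add_smul_eq_prod {n : ℕ} {B : Matrix (Fin n) (Fin n) ℂ} (hB : B.IsHermitian)
    (P : ℝ) :
    ((1 : Matrix (Fin n) (Fin n) ℂ) + (P : ℂ) • B).det
      = ((∏ i, (1 + P * hB.eigenvalues i) : ℝ) : ℂ) := by
  -- conjugation by the unitary eigenvector matrix is an algebra automorphism fixing `1`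
  have h : (1 : Matrix (Fin n) (Fin n) ℂ) + (P : ℂ) • B
      = Unitary.conjStarAlgAut ℂ _ hB.eigenvectorUnitary
        (diagonal fun i => ((1 + P * hB.eigenvalues i : ℝ) : ℂ)) := by
    have hd : (diagonal fun i => ((1 + P * hB.eigenvalues i : ℝ) : ℂ))
        = 1 + (P : ℂ) • diagonal (RCLike.ofReal ∘ hB.eigenvalues) := by
      ext i j
      by_cases hij : i = j <;> simp [hij, Matrix.one_apply]
    rw [hd, map_add, map_one, map_smul, ← hB.spectral_theorem]
  rw [h, Unitary.conjStarAlgAut_apply, det_mul_comm, ← mul_assoc]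
  simp

lemma tendsto_log_one_add_mul_div_log {c : ℝ} (hc : 0 ≤ c) :
    Tendsto (fun P : ℝ => Real.log (1 + P * c) / Real.log P) atTop
      (nhds (if c ≠ 0 then 1 else 0)) := by
  rcases hc.eq_or_lt with rfl | hc
  · simp
  · rw [if_pos hc.ne']
    have h1 : Tendsto (fun P : ℝ => Real.log (P⁻¹ + c)) atTop (nhds (Real.log (0 + c))) :=
      (tendsto_inv_atTop_zero.add_const c).log (by simpa using hc.ne')
    have h2 := (h1.div_atTop Real.tendsto_log_atTop).const_add 1
    rw [add_zero] at h2
    refine h2.congr' ?_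
    filter_upwards [eventually_gt_atTop 1] with P hP
    have hP0 : 0 < P := by linarith
    have hl : Real.log P ≠ 0 := (Real.log_pos hP).ne'
    have he : 1 + P * c = P * (P⁻¹ + c) := by field_simp
    rw [he, Real.log_mul hP0.ne' (by positivity), add_div, div_self hl]

/-- For an `n × m` complex matrix `A` (not depending on `P`), for every real `P ≥ 0`
the matrix `I + P • A * Aᴴ` is Hermitian positive definite (hence has positive real
determinant), and `P ↦ log det (I + P • A * Aᴴ) / log P` tends to `rank A` as `P → ∞`. -/
theorem stmt0 (n m : ℕ) (hn : 0 < n) (hm : 0 < m) (A : Matrix (Fin n) (Fin m) ℂ) :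
    (∀ P : ℝ, 0 ≤ P →
      ((1 : Matrix (Fin n) (Fin n) ℂ) + (P : ℂ) • (A * Aᴴ)).PosDef ∧
      0 < ((1 : Matrix (Fin n) (Fin n) ℂ) + (P : ℂ) • (A * Aᴴ)).det.re ∧
      ((1 : Matrix (Fin n) (Fin n) ℂ) + (P : ℂ) • (A * Aᴴ)).det.im = 0) ∧
    Tendsto
      (fun P : ℝ =>
        Real.log (((1 : Matrix (Fin n) (Fin n) ℂ) + (P : ℂ) • (A * Aᴴ)).det.re) / Real.log P)
      atTop (nhds (A.rank : ℝ)) := by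
  have hB : (A * Aᴴ).PosSemidef := posSemidef_self_mul_conjTranspose A
  constructor
  · intro P hP
    have hpd : ((1 : Matrix (Fin n) (Fin n) ℂ) + (P : ℂ) • (A * Aᴴ)).PosDef :=
      PosDef.one.add_posSemidef (hB.smul (by exact_mod_cast hP))
    have hdet := Complex.pos_iff.mp hpd.det_pos
    exact ⟨hpd, hdet.1, hdet.2.symm⟩
  · have hrank : (A.rank : ℝ) = ∑ i, if hB.1.eigenvalues i ≠ 0 then (1 : ℝ) else 0 := by
      rw [← rank_self_mul_conjTranspose A, hB.1.rank_eq_card_non_zero_eigs, Fintype.card_subtype,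
        Finset.sum_boole]
    rw [hrank]
    refine (tendsto_finsetSum Finset.univ fun i _ =>
      tendsto_log_one_add_mul_div_log (hB.eigenvalues_nonneg i)).congr' ?_
    filter_upwards [eventually_ge_atTop 0] with P hP
    rw [det_one_add_smul_eq_prod hB.1, Complex.ofReal_re, Real.log_prod, Finset.sum_div]
    intro i _
    have := mul_nonneg hP (hB.eigenvalues_nonneg i)
    positivity
end

section
/- Let ι be a finite type of cardinality L and let h be a real-valued function on finite subsets of ι that is submodular (h(S ∪ T) + h(S ∩ T) ≤ h(S) + h(T) for all S, T) and symmetric (h(S) = h(T) whenever |S| = |T|). Then for all natural numbers k, N, M with N ≤ M and M + k ≤ L, and any subsets S₁, S₂, S₃, S₄ of ι with |S₁| = N + k, |S₂| = N, |S₃| = M + k, |S₄| = M, one has h(S₁) − h(S₂) ≥ h(S₃) − h(S₄). -/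
/-- If `h` on finite subsets of a type of cardinality `L` is submodular and symmetric
(depends only on cardinality), then for `N ≤ M` and `M + k ≤ L`, differences of `h` over
nested cardinalities are nonincreasing: `h(S₁) − h(S₂) ≥ h(S₃) − h(S₄)` whenever
`|S₁| = N + k`, `|S₂| = N`, `|S₃| = M + k`, `|S₄| = M`. -/
theorem stmt3 {ι : Type*} [Fintype ι] [DecidableEq ι] (L : ℕ) (hL : Fintype.card ι = L)
    (h : Finset ι → ℝ)
    (hsub : ∀ S T : Finset ι, h (S ∪ T) + h (S ∩ T) ≤ h S + h T)
    (hsym : ∀ S T : Finset ι, S.card = T.card → h S = h T)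
    (k N M : ℕ) (hNM : N ≤ M) (hML : M + k ≤ L)
    (S₁ S₂ S₃ S₄ : Finset ι)
    (h1 : S₁.card = N + k) (h2 : S₂.card = N) (h3 : S₃.card = M + k) (h4 : S₄.card = M) :
    h S₁ - h S₂ ≥ h S₃ - h S₄ := by
  -- Inside `S₃` choose `D ⊆ A` with `|A| = N + k`, `|D| = N`. The set `B = S₃ \ (A \ D)` has
  -- `|B| = M`, `A ∪ B = S₃` and `A ∩ B = D`, so submodularity at `A`, `B` is the claim.
  obtain ⟨A, hA, hAc⟩ := Finset.exists_subset_card_eq (s := S₃) (n := N + k) (by omega)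
  obtain ⟨D, hD, hDc⟩ := Finset.exists_subset_card_eq (s := A) (n := N) (by omega)
  have hBc : (S₃ \ (A \ D)).card = M := by
    rw [Finset.card_sdiff_of_subset (Finset.sdiff_subset.trans hA),
      Finset.card_sdiff_of_subset hD]
    omega
  have hU : A ∪ S₃ \ (A \ D) = S₃ := by
    ext x
    have := @hA x
    simp only [Finset.mem_union, Finset.mem_sdiff]
    tauto
  have hI : A ∩ (S₃ \ (A \ D)) = D := by
    ext x
    have := @hA x
    have := @hD x
    simp only [Finset.mem_inter, Finset.mem_sdiff]
    tauto
  have key := hsub A (S₃ \ (A \ D))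
  rw [hU, hI, hsym A S₁ (by omega), hsym D S₂ (by omega), hsym _ S₄ (hBc.trans h4.symm)] at key
  linarith
end

section
/- Let ι be a finite type and let h be a real-valued function on finite subsets of ι that is submodular (h(S ∪ T) + h(S ∩ T) ≤ h(S) + h(T) for all S, T), symmetric (h(S) = h(T) whenever |S| = |T|), and satisfies h(∅) = 0. Then for all finite subsets S, T of ι with |S| ≤ |T|, one has |T|·h(S) ≥ |S|·h(T). -/
/-!
By symmetry `h S = g |S|` for some `g : ℕ → ℝ`, with `g 0 = 0`. Submodularity applied to two
`(k+1)`-sets that share a `k`-set says that `g` is concave on `0, …, |ι|`, and a concave sequence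
starting at `0` has `g n / n` nonincreasing; this is proved in the division-free form
`m * g n ≤ n * g m`.
-/

/-- Consecutive case of `mul_le_mul_of_concave`. -/
lemma mul_succ_le_of_concave (g : ℕ → ℝ) (N : ℕ) (g0 : g 0 = 0)
    (hg : ∀ k, k + 2 ≤ N → g (k + 2) + g k ≤ 2 * g (k + 1)) (k : ℕ) (hk : k + 1 ≤ N) :
    (k : ℝ) * g (k + 1) ≤ (k + 1) * g k := by
  induction k with
  | zero => simp [g0]
  | succ k ih =>
    have h1 := ih (by omega)
    have h2 := mul_le_mul_of_nonneg_left (hg k hk) (by positivity : (0 : ℝ) ≤ k + 1)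
    push_cast
    rw [show k + 1 + 1 = k + 2 from rfl]
    linarith

/-- A sequence vanishing at `0` and concave on `0, …, N` has `g n / n` nonincreasing there. -/
lemma mul_le_mul_of_concave (g : ℕ → ℝ) (N : ℕ) (g0 : g 0 = 0)
    (hg : ∀ k, k + 2 ≤ N → g (k + 2) + g k ≤ 2 * g (k + 1)) (m n : ℕ) (hmn : m ≤ n)
    (hn : n ≤ N) : (m : ℝ) * g n ≤ n * g m := by
  induction n, hmn using Nat.le_induction with
  | base => exact le_rfl
  | succ n hmn ih =>
    -- The chaining below divides by `n`, so `n = 0` (which forces `m = 0`) is separate.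
    rcases Nat.eq_zero_or_pos n with rfl | hpos
    · obtain rfl : m = 0 := by omega
      simp [g0]
    · have hpos' : (0 : ℝ) < n := by exact_mod_cast hpos
      have h1 := mul_le_mul_of_nonneg_left (ih (by omega)) (by positivity : (0 : ℝ) ≤ n + 1)
      have h2 := mul_le_mul_of_nonneg_left (mul_succ_le_of_concave g N g0 hg n hn)
        (Nat.cast_nonneg m : (0 : ℝ) ≤ m)
      push_cast
      refine le_of_mul_le_mul_left ?_ hpos'
      linarith

/-- If `h` on finite subsets of a finite type is submodular, symmetric (depends only on
cardinality), and `h ∅ = 0`, then `|T| * h S ≥ |S| * h T` whenever `|S| ≤ |T|`. -/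
theorem stmt5 {ι : Type*} [Fintype ι] [DecidableEq ι] (h : Finset ι → ℝ)
    (hsub : ∀ S T : Finset ι, h (S ∪ T) + h (S ∩ T) ≤ h S + h T)
    (hsym : ∀ S T : Finset ι, S.card = T.card → h S = h T)
    (h0 : h ∅ = 0)
    (S T : Finset ι) (hST : S.card ≤ T.card) :
    (T.card : ℝ) * h S ≥ (S.card : ℝ) * h T := by
  obtain ⟨g, hg⟩ : ∃ g : ℕ → ℝ, h = g ∘ Finset.card :=
    (Function.factorsThrough_iff h).1 fun A B hAB => hsym A B hAB
  subst hg
  refine mul_le_mul_of_concave g (Fintype.card ι) (by simpa using h0) (fun k hk => ?_)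
    S.card T.card hST T.card_le_univ
  obtain ⟨U, -, hU⟩ := Finset.exists_subset_card_eq (s := (Finset.univ : Finset ι)) hk
  obtain ⟨a, V, ha, rfl, hV⟩ := Finset.card_eq_succ.1 hU
  obtain ⟨b, A, hb, rfl, hA⟩ := Finset.card_eq_succ.1 hV
  have hab : a ≠ b := fun e => ha (by simp [e])
  have haA : a ∉ A := fun e => ha (by simp [e])
  have hunion : insert a A ∪ insert b A = insert a (insert b A) := by
    ext x; simp only [Finset.mem_union, Finset.mem_insert]; tauto
  have hinter : insert a A ∩ insert b A = A := by
    ext x; simp only [Finset.mem_inter, Finset.mem_insert]; grind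
  have key := hsub (insert a A) (insert b A)
  rw [hunion, hinter] at key
  simp only [Function.comp_apply, hU, hA, Finset.card_insert_of_notMem haA,
    Finset.card_insert_of_notMem hb] at key
  linarith
end

section
/- Let nA, nB, m be positive integers with max{nA, nB} < m. Then the no-CSIT SDoF is strictly smaller than the delayed partial-CSIT SDoF: if m ≤ nA + nB then max(nA − nB, 0) < nA·(m − nB)/m, and if m > nA + nB then max(nA − nB, 0) < nA²/(nA + nB). -/
/-- For positive integers `nA, nB, m` with `max nA nB < m`, the no-CSIT SDoF is strictly
smaller than the delayed partial-CSIT SDoF: if `m ≤ nA + nB` then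
`max (nA − nB) 0 < nA (m − nB) / m`, and if `m > nA + nB` then
`max (nA − nB) 0 < nA² / (nA + nB)`. -/
theorem stmt11 (nA nB m : ℕ) (hA : 0 < nA) (hB : 0 < nB) (hm : max nA nB < m) :
    (m ≤ nA + nB →
      max ((nA : ℝ) - nB) 0 < (nA : ℝ) * ((m : ℝ) - nB) / m) ∧
    (nA + nB < m →
      max ((nA : ℝ) - nB) 0 < (nA : ℝ) ^ 2 / ((nA : ℝ) + nB)) := by
  obtain ⟨hAm, hBm⟩ := max_lt_iff.mp hm
  have a0 : (0 : ℝ) < nA := by exact_mod_cast hA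
  have b0 : (0 : ℝ) < nB := by exact_mod_cast hB
  have am : (nA : ℝ) < m := by exact_mod_cast hAm
  have bm : (nB : ℝ) < m := by exact_mod_cast hBm
  have m0 : (0 : ℝ) < m := a0.trans am
  refine ⟨fun _ => max_lt ?_ ?_, fun _ => max_lt ?_ (by positivity)⟩
  · -- After clearing the denominator, the gap between the two sides is `nB * (m - nA)`.
    rw [lt_div_iff₀ m0]
    nlinarith [mul_pos b0 (sub_pos.mpr am)]
  · exact div_pos (mul_pos a0 (sub_pos.mpr bm)) m0
  · -- After clearing the denominator, the gap between the two sides is `nB ^ 2`.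
    rw [lt_div_iff₀ (add_pos a0 b0)]
    nlinarith [pow_pos b0 2]
end

section
/- Let a, b, t be real numbers with 0 < a < t and 0 < b < t, and set x* = a·t·(t − b)/(t² − a·b) and y* = b·t·(t − a)/(t² − a·b). Then the set { (x, y) ∈ ℝ² : x ≥ 0, y ≥ 0, x/a + y/t ≤ 1, x/t + y/b ≤ 1 } equals the convex hull of the four points (0, 0), (a, 0), (0, b), and (x*, y*). -/
/-!
The region is convex and contains the four points, so it contains their hull. Conversely, write
`P = (X, Y)` for the fourth point; it lies on both lines `x/a + y/t = 1` and `x/t + y/b = 1`.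
The ray from the origin through `P` cuts the region into two triangles, `0, (a, 0), P` and
`0, (0, b), P`. A point `(x, y)` below the ray is `((x - (y/Y) X)/a) • (a, 0) + (y/Y) • P`, with
nonnegative coefficients whose sum is `x/a + y/t ≤ 1`; above the ray the roles of the coordinates
are exchanged.
-/

lemma smul_add_smul_mem_of_zero_mem {s : Set (ℝ × ℝ)} (hs : Convex ℝ s) {A P : ℝ × ℝ}
    (h0 : 0 ∈ s) (hA : A ∈ s) (hP : P ∈ s) {u v : ℝ} (hu : 0 ≤ u) (hv : 0 ≤ v)
    (huv : u + v ≤ 1) : u • A + v • P ∈ s := by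
  have h := hs.sum_mem (t := Finset.univ) (w := ![1 - u - v, u, v]) (z := ![0, A, P])
    (by intro i _; fin_cases i <;> simp <;> linarith)
    (by simp [Fin.sum_univ_three]; ring)
    (by intro i _; fin_cases i <;> simpa)
  simpa [Fin.sum_univ_three] using h

lemma convex_region (a b t : ℝ) :
    Convex ℝ {p : ℝ × ℝ | 0 ≤ p.1 ∧ 0 ≤ p.2 ∧ p.1 / a + p.2 / t ≤ 1 ∧ p.1 / t + p.2 / b ≤ 1} := by
  rintro ⟨x, y⟩ ⟨h1, h2, h3, h4⟩ ⟨x', y'⟩ ⟨h1', h2', h3', h4'⟩ α β hα hβ hαβ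
  simp only [Set.mem_ofPred_eq, Prod.smul_mk, Prod.mk_add_mk, smul_eq_mul] at *
  refine ⟨by positivity, by positivity, ?_, ?_⟩
  · calc _ = α * (x / a + y / t) + β * (x' / a + y' / t) := by ring
      _ ≤ α * 1 + β * 1 := by gcongr
      _ = 1 := by linarith
  · calc _ = α * (x / t + y / b) + β * (x' / t + y' / b) := by ring
      _ ≤ α * 1 + β * 1 := by gcongr
      _ = 1 := by linarith

/-- For `0 < a < t` and `0 < b < t`, the region
`{(x, y) : x ≥ 0, y ≥ 0, x/a + y/t ≤ 1, x/t + y/b ≤ 1}` is the convex hull of the four points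
`(0,0)`, `(a,0)`, `(0,b)` and `(x*, y*) = (a t (t−b)/(t²−ab), b t (t−a)/(t²−ab))`. -/
theorem stmt13 (a b t : ℝ) (ha : 0 < a) (hat : a < t) (hb : 0 < b) (hbt : b < t) :
    {p : ℝ × ℝ | 0 ≤ p.1 ∧ 0 ≤ p.2 ∧ p.1 / a + p.2 / t ≤ 1 ∧ p.1 / t + p.2 / b ≤ 1}
      = convexHull ℝ
          {(0, 0), (a, 0), (0, b),
            (a * t * (t - b) / (t ^ 2 - a * b), b * t * (t - a) / (t ^ 2 - a * b))} := by
  have ht : 0 < t := ha.trans hat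
  have hD : 0 < t ^ 2 - a * b := by nlinarith
  have hX : 0 < a * t * (t - b) / (t ^ 2 - a * b) :=
    div_pos (mul_pos (mul_pos ha ht) (sub_pos.2 hbt)) hD
  have hY : 0 < b * t * (t - a) / (t ^ 2 - a * b) :=
    div_pos (mul_pos (mul_pos hb ht) (sub_pos.2 hat)) hD
  have e1 : a * t * (t - b) / (t ^ 2 - a * b) / a
      + b * t * (t - a) / (t ^ 2 - a * b) / t = 1 := by
    field_simp
    ring
  have e2 : a * t * (t - b) / (t ^ 2 - a * b) / t
      + b * t * (t - a) / (t ^ 2 - a * b) / b = 1 := by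
    field_simp
    ring
  generalize a * t * (t - b) / (t ^ 2 - a * b) = X at *
  generalize b * t * (t - a) / (t ^ 2 - a * b) = Y at *
  apply Set.Subset.antisymm
  · rintro ⟨x, y⟩ ⟨hx, hy, h1, h2⟩
    simp only at hx hy h1 h2
    have hc := convex_convexHull ℝ ({(0, 0), (a, 0), (0, b), (X, Y)} : Set (ℝ × ℝ))
    have hsub := subset_convexHull ℝ ({(0, 0), (a, 0), (0, b), (X, Y)} : Set (ℝ × ℝ))
    rcases le_total (y * X) (x * Y) with h | h
    · have hv : y / Y * X ≤ x := by
        rw [div_mul_eq_mul_div, div_le_iff₀ hY]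
        exact h
      have hsum : (x - y / Y * X) / a + y / Y = x / a + y / t := by
        calc _ = x / a + y / Y * (1 - X / a) := by ring
          _ = x / a + y / Y * (Y / t) := by rw [← e1]; ring
          _ = _ := by field_simp
      have key := smul_add_smul_mem_of_zero_mem hc (A := (a, 0)) (P := (X, Y))
        (hsub (Or.inl rfl)) (hsub (by simp)) (hsub (by simp))
        (div_nonneg (sub_nonneg.2 hv) ha.le) (div_nonneg hy hY.le) (hsum.trans_le h1)
      convert key using 1
      ext <;> simp <;> field_simp
      ring
    · have hv : x / X * Y ≤ y := by
        rw [div_mul_eq_mul_div, div_le_iff₀ hX]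
        exact h
      have hsum : (y - x / X * Y) / b + x / X = x / t + y / b := by
        calc _ = y / b + x / X * (1 - Y / b) := by ring
          _ = y / b + x / X * (X / t) := by rw [← e2]; ring
          _ = _ := by field_simp; ring
      have key := smul_add_smul_mem_of_zero_mem hc (A := (0, b)) (P := (X, Y))
        (hsub (Or.inl rfl)) (hsub (by simp)) (hsub (by simp))
        (div_nonneg (sub_nonneg.2 hv) hb.le) (div_nonneg hx hX.le) (hsum.trans_le h2)
      convert key using 1
      ext <;> simp <;> field_simp
      ring
  · refine convexHull_min ?_ (convex_region a b t)
    have hat' : a / t ≤ 1 := (div_le_one ht).2 hat.le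
    have hbt' : b / t ≤ 1 := (div_le_one ht).2 hbt.le
    rintro p (rfl | rfl | rfl | rfl)
    · simp
    · simp [ha.le, ha.ne', hat']
    · simp [hb.le, hb.ne', hbt']
    · exact ⟨hX.le, hY.le, e1.le, e2.le⟩
end

section
/- Let nA, nB, m be positive integers with nB < m ≤ nA and let H be an nA×m complex matrix with rank(H) = m. Let E be the m×nB matrix selecting the first nB coordinates (E = [I_{nB}; 0]). Then the function P ↦ ( log det(I_{nA} + (P/m)·H·Hᴴ) − log det(I_{nA} + (nB·P/m)·H·E·Eᴴ·Hᴴ) ) / log P tends to m − nB as the real parameter P tends to infinity. -/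
/-!
For an injective `n × k` matrix `A` and `c > 0`, Sylvester's identity and homogeneity of the
determinant give, for `P > 0`,
`det (I + cP A Aᴴ) = det (I + cP Aᴴ A) = P ^ k * det (P⁻¹ I + c Aᴴ A)`.
The last factor tends to `det (c Aᴴ A)`, which is positive because the Gram matrix of an injective
matrix is positive definite. Hence `log det (I + cP A Aᴴ) / log P → k`
(`tendsto_logdet_div_log`). The theorem is the difference of the cases `A = H` (`k = m`) and
`A = H E` (`k = nB`); both are injective, the first by its rank and the second since `Eᴴ E = I`.
-/

open Filter Matrix

open scoped ComplexOrder in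
/-- The log-determinant of `I + cP A Aᴴ` grows like `k * log P`, where `k` is the number of
columns of the injective matrix `A`. -/
theorem tendsto_logdet_div_log {n k : ℕ} (A : Matrix (Fin n) (Fin k) ℂ)
    (hA : Function.Injective A.mulVec) (c : ℝ) (hc : 0 < c) :
    Tendsto (fun P : ℝ =>
      Real.log (((1 : Matrix (Fin n) (Fin n) ℂ) + ((c * P : ℝ) : ℂ) • (A * Aᴴ)).det.re)
        / Real.log P) atTop (nhds (k : ℝ)) := by
  set d : ℝ → ℝ := fun t =>
    ((((t : ℝ) : ℂ) • (1 : Matrix (Fin k) (Fin k) ℂ) + (c : ℂ) • (Aᴴ * A)).det).re with hd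
  have hcont : Continuous d := by
    refine Complex.continuous_re.comp (Continuous.matrix_det ?_)
    fun_prop
  have hpos : 0 < d 0 := by
    have h1 : ((c : ℂ) • (Aᴴ * A)).PosDef :=
      (PosDef.conjTranspose_mul_self A hA).smul (by exact_mod_cast hc)
    have h2 := h1.det_pos
    simpa [hd] using (Complex.lt_def.1 h2).1
  have hlim : Tendsto (fun P : ℝ => d P⁻¹) atTop (nhds (d 0)) :=
    (hcont.tendsto 0).comp tendsto_inv_atTop_zero
  have hlog : Tendsto (fun P : ℝ => Real.log (d P⁻¹) / Real.log P) atTop (nhds 0) :=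
    (hlim.log hpos.ne').div_atTop Real.tendsto_log_atTop
  have hsum := hlog.const_add (k : ℝ)
  rw [add_zero] at hsum
  refine hsum.congr' ?_
  filter_upwards [eventually_gt_atTop 1, hlim.eventually (lt_mem_nhds hpos)] with P hP hdP
  have hP0 : (0 : ℝ) < P := by linarith
  have hPc : (P : ℂ) ≠ 0 := by exact_mod_cast hP0.ne'
  have hdet : ((1 : Matrix (Fin n) (Fin n) ℂ) + ((c * P : ℝ) : ℂ) • (A * Aᴴ)).det.re
      = P ^ k * d P⁻¹ := by
    have h1 : (1 : Matrix (Fin n) (Fin n) ℂ) + ((c * P : ℝ) : ℂ) • (A * Aᴴ)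
        = 1 + A * (((c * P : ℝ) : ℂ) • Aᴴ) := by rw [Matrix.mul_smul]
    have h2 : (1 : Matrix (Fin k) (Fin k) ℂ) + (((c * P : ℝ) : ℂ) • Aᴴ) * A
        = (P : ℂ) • (((P⁻¹ : ℝ) : ℂ) • (1 : Matrix (Fin k) (Fin k) ℂ) + (c : ℂ) • (Aᴴ * A)) := by
      rw [smul_add, smul_smul, smul_smul, Matrix.smul_mul]
      push_cast
      rw [mul_inv_cancel₀ hPc, one_smul, mul_comm (c : ℂ)]
    rw [h1, det_one_add_mul_comm, h2, det_smul, Fintype.card_fin, ← Complex.ofReal_pow,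
      Complex.re_ofReal_mul]
  have hlogP : Real.log P ≠ 0 := (Real.log_pos hP).ne'
  rw [hdet, Real.log_mul (by positivity) hdP.ne', Real.log_pow]
  field_simp

/-- For `nB < m ≤ nA`, an `nA × m` complex matrix `H` of rank `m`, and `E = [I_{nB}; 0]`
the `m × nB` matrix selecting the first `nB` coordinates, the function
`P ↦ (log det (I + (P/m) H Hᴴ) − log det (I + (nB P/m) H E Eᴴ Hᴴ)) / log P`
tends to `m − nB` as `P → ∞`. -/
theorem stmt15 (nA nB m : ℕ) (hB : 0 < nB) (hBm : nB < m) (hmA : m ≤ nA)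
    (H : Matrix (Fin nA) (Fin m) ℂ) (hH : H.rank = m)
    (E : Matrix (Fin m) (Fin nB) ℂ)
    (hE : E = Matrix.of fun (i : Fin m) (j : Fin nB) => if (i : ℕ) = (j : ℕ) then (1 : ℂ) else 0) :
    Tendsto
      (fun P : ℝ =>
        (Real.log (((1 : Matrix (Fin nA) (Fin nA) ℂ) + ((P / m : ℝ) : ℂ) • (H * Hᴴ)).det.re)
          - Real.log (((1 : Matrix (Fin nA) (Fin nA) ℂ)
              + ((nB * P / m : ℝ) : ℂ) • (H * E * Eᴴ * Hᴴ)).det.re)) / Real.log P)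
      atTop (nhds ((m : ℝ) - nB)) := by
  have hm : (0 : ℝ) < m := by exact_mod_cast hB.trans hBm
  have hB' : (0 : ℝ) < nB := by exact_mod_cast hB
  have hHinj : Function.Injective H.mulVec := by
    have hker : Module.finrank ℂ (LinearMap.ker H.mulVecLin) = 0 := by
      have h := H.mulVecLin.finrank_range_add_finrank_ker
      rw [Module.finrank_fin_fun] at h
      have h' : Module.finrank ℂ (LinearMap.range H.mulVecLin) = m := hH
      omega
    exact LinearMap.ker_eq_bot.1 (Submodule.finrank_eq_zero.1 hker)
  have hEinj : Function.Injective E.mulVec := by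
    have hEE : Eᴴ * E = 1 := by
      ext a b
      rw [mul_apply, Finset.sum_eq_single (Fin.castLE hBm.le b)]
      · simp [hE, one_apply, Fin.ext_iff, eq_comm]
      · intro i _ hi
        have hi' : (i : ℕ) ≠ b := fun h => hi (Fin.ext h)
        simp [hE, hi']
      · simp
    intro x y hxy
    have h := congrArg (Eᴴ.mulVec) hxy
    simpa [mulVec_mulVec, hEE] using h
  have hHE : Function.Injective (H * E).mulVec := by
    intro x y hxy
    apply hEinj
    apply hHinj
    simpa [mulVec_mulVec] using hxy
  have h1 := tendsto_logdet_div_log H hHinj (1 / m) (by positivity)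
  have h2 := tendsto_logdet_div_log (H * E) hHE (nB / m) (by positivity)
  refine (h1.sub h2).congr fun P => ?_
  rw [conjTranspose_mul, ← Matrix.mul_assoc, sub_div, one_div_mul_eq_div, div_mul_eq_mul_div]
end

section
/- Let nB, m be positive integers with nB < m and let G be an nB×m complex matrix such that the nB×nB submatrix formed by the first nB columns of G is invertible. Let E be the m×nB matrix selecting the first nB coordinates (E = [I_{nB}; 0]). Then the function P ↦ ( log det(I_{nB} + (P/m)·G·Gᴴ) − log det(I_{nB} + (nB·P/m)·G·E·Eᴴ·Gᴴ) ) / log P tends to 0 as the real parameter P tends to infinity. -/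
open Filter Matrix
open scoped ComplexOrder

/-!
For a positive definite `n × n` matrix `A` and `c > 0`, factoring out `P` gives
`det (1 + c P A) = P ^ n * det (P⁻¹ + c A)`, and the second factor tends to `det (c A) > 0`. Hence
`log det (1 + c P A) - n log P` converges (`tendsto_log_det_sub`). Both `G Gᴴ` and
`G E Eᴴ Gᴴ = (G E) (G E)ᴴ` are positive definite of the same size `nB`, because `G E` is the
invertible block of the first `nB` columns of `G`. The difference of the two logarithms therefore
converges, and dividing by `log P → ∞` gives the limit `0`.
-/

theorem tendsto_log_det_sub {n : ℕ} (A : Matrix (Fin n) (Fin n) ℂ) (hA : A.PosDef) (c : ℝ)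
    (hc : 0 < c) :
    Tendsto (fun P : ℝ =>
      Real.log ((1 + ((c * P : ℝ) : ℂ) • A).det.re) - n * Real.log P) atTop
      (nhds (Real.log (((c : ℂ) • A).det.re))) := by
  have hpos : 0 < (((c : ℂ) • A).det.re) := by
    have h : ((c : ℂ) • A).PosDef := hA.smul (by exact_mod_cast hc)
    exact (Complex.pos_iff.mp h.det_pos).1
  have hlim : Tendsto (fun P : ℝ =>
      ((((P⁻¹ : ℝ) : ℂ) • (1 : Matrix (Fin n) (Fin n) ℂ) + (c : ℂ) • A).det.re)) atTop
      (nhds (((c : ℂ) • A).det.re)) := by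
    have hcont : Continuous (fun t : ℝ =>
        (((t : ℂ) • (1 : Matrix (Fin n) (Fin n) ℂ) + (c : ℂ) • A).det.re)) := by
      fun_prop
    have h := (hcont.tendsto 0).comp tendsto_inv_atTop_zero
    simp only [Complex.ofReal_zero, zero_smul, zero_add] at h
    exact h
  refine (hlim.log hpos.ne').congr' ?_
  filter_upwards [eventually_gt_atTop 0, hlim.eventually (lt_mem_nhds hpos)] with P hP hd
  have hfac : (1 + ((c * P : ℝ) : ℂ) • A)
      = (P : ℂ) • (((P⁻¹ : ℝ) : ℂ) • (1 : Matrix (Fin n) (Fin n) ℂ) + (c : ℂ) • A) := by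
    have hP' : (P : ℂ) ≠ 0 := by exact_mod_cast hP.ne'
    rw [smul_add, smul_smul, smul_smul]
    push_cast
    rw [mul_inv_cancel₀ hP', one_smul, mul_comm]
  rw [hfac, det_smul, Fintype.card_fin, ← Complex.ofReal_pow, Complex.re_ofReal_mul,
    Real.log_mul (pow_pos hP n).ne' hd.ne', Real.log_pow]
  ring

/-- For `nB < m`, an `nB × m` complex matrix `G` whose first `nB` columns form an invertible
matrix, and `E = [I_{nB}; 0]` the `m × nB` matrix selecting the first `nB` coordinates, the
function `P ↦ (log det (I + (P/m) G Gᴴ) − log det (I + (nB P/m) G E Eᴴ Gᴴ)) / log P`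
tends to `0` as `P → ∞`. -/
theorem stmt16 (nB m : ℕ) (hB : 0 < nB) (hBm : nB < m)
    (G : Matrix (Fin nB) (Fin m) ℂ)
    (hG : IsUnit (G.submatrix id (Fin.castLE hBm.le)))
    (E : Matrix (Fin m) (Fin nB) ℂ)
    (hE : E = Matrix.of fun (i : Fin m) (j : Fin nB) => if (i : ℕ) = (j : ℕ) then (1 : ℂ) else 0) :
    Tendsto
      (fun P : ℝ =>
        (Real.log (((1 : Matrix (Fin nB) (Fin nB) ℂ) + ((P / m : ℝ) : ℂ) • (G * Gᴴ)).det.re)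
          - Real.log (((1 : Matrix (Fin nB) (Fin nB) ℂ)
              + ((nB * P / m : ℝ) : ℂ) • (G * E * Eᴴ * Gᴴ)).det.re)) / Real.log P)
      atTop (nhds (0 : ℝ)) := by
  have hm : (0 : ℝ) < m := by exact_mod_cast hB.trans hBm
  have hn : (0 : ℝ) < nB := by exact_mod_cast hB
  have hGE : G * E = G.submatrix id (Fin.castLE hBm.le) := by
    ext i j
    rw [mul_apply, Finset.sum_eq_single (Fin.castLE hBm.le j)]
    · simp [hE]
    · intro b _ hb
      have : (b : ℕ) ≠ j := fun h => hb (Fin.ext h)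
      simp [hE, this]
    · simp
  have hinj : Function.Injective (G * E).vecMul := by
    rw [hGE]
    exact vecMul_injective_of_isUnit hG
  have hinjG : Function.Injective G.vecMul := by
    intro x y hxy
    apply hinj
    have hxy' : x ᵥ* G = y ᵥ* G := hxy
    change x ᵥ* (G * E) = y ᵥ* (G * E)
    rw [← vecMul_vecMul, ← vecMul_vecMul, hxy']
  have h1 := tendsto_log_det_sub (G * Gᴴ) (PosDef.mul_conjTranspose_self G hinjG)
    (1 / m) (by positivity)
  have h2 := tendsto_log_det_sub (G * E * (G * E)ᴴ) (PosDef.mul_conjTranspose_self _ hinj)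
    (nB / m) (by positivity)
  refine ((h1.sub h2).div_atTop Real.tendsto_log_atTop).congr fun P => ?_
  rw [conjTranspose_mul, ← Matrix.mul_assoc, one_div_mul_eq_div, div_mul_eq_mul_div]
  ring
end
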